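/- For all η,η' ∈ ℂ and all w,y,z ∈ ℤ/3ℤ with y ≠ z, one has (1/3)·(M^{w0/yz}[η,η'] + M^{w1/yz}[η,η'] + M^{w2/yz}[η,η']) = (1/3)·J^{w+y+z} + (2/3)·J^{w−y}. -/

import Mathlib

noncomputable def ω : ℂ := Complex.exp (2 * Real.pi * Complex.I / 3)

def J : Matrix (Fin 3) (Fin 3) ℂ := !![0,1,0; 0,0,1; 1,0,0]

noncomputable def W : Matrix (Fin 3) (Fin 3) ℂ := !![1,1,1; 1,ω,ω^2; 1,ω^2,ω]

/-- generalized cevian operator `S[η,η'] = W ⬝ diag(1,η',η) ⬝ W⁻¹` -/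
noncomputable def S (η η' : ℂ) : Matrix (Fin 3) (Fin 3) ℂ :=
  W * Matrix.diagonal ![1, η', η] * W⁻¹

/-- `ω^k` for `k : ZMod 3` (well defined since `ω^3 = 1`). -/
noncomputable def ωz (k : ZMod 3) : ℂ := ω ^ k.val

/-- `J^k` for `k : ZMod 3` (well defined since `J^3 = 1`). -/
def Jz (k : ZMod 3) : Matrix (Fin 3) (Fin 3) ℂ := J ^ k.val

/-- generalized median operator `M^{wx/yz}[η,η']` -/
noncomputable def M (η η' : ℂ) (w x y z : ZMod 3) : Matrix (Fin 3) (Fin 3) ℂ :=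
  S ((η * ωz (-x) - ωz (-w)) / (ωz (-z) - ωz (-y)))
    ((η' * ωz x - ωz w) / (ωz z - ωz y))

theorem ω_isPrimitiveRoot : IsPrimitiveRoot ω 3 := by
  simpa [ω] using Complex.isPrimitiveRoot_exp 3 (by norm_num)

theorem ω_pow_three : ω ^ 3 = 1 := ω_isPrimitiveRoot.pow_eq_one

theorem one_add_ω_add_sq : 1 + ω + ω ^ 2 = 0 := by
  simpa [Finset.sum_range_succ] using ω_isPrimitiveRoot.geom_sum_eq_zero (by norm_num)

theorem ωz_add (a b : ZMod 3) : ωz (a + b) = ωz a * ωz b := by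
  rw [ωz, ωz, ωz, ← pow_add, ZMod.val_add, ← pow_eq_pow_mod _ ω_pow_three]

theorem ωz_pow_three (a : ZMod 3) : ωz a ^ 3 = 1 := by
  rw [ωz, ← pow_mul, mul_comm, pow_mul, ω_pow_three, one_pow]

theorem ωz_neg (a : ZMod 3) : ωz (-a) = ωz a ^ 2 := by
  rw [sq, ← ωz_add]
  congr 1
  revert a
  decide

theorem ωz_injective : Function.Injective ωz := fun a b h =>
  ZMod.val_injective 3 (ω_isPrimitiveRoot.pow_inj a.val_lt b.val_lt h)

theorem ωz_zero : ωz 0 = 1 := pow_zero ω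

theorem ωz_one : ωz 1 = ω := pow_one ω

theorem ωz_two : ωz 2 = ω ^ 2 := rfl

theorem isUnit_det_W : IsUnit W.det := by
  have h : W.det = -3 * ω * (1 - ω) := by
    simp only [W, Matrix.det_fin_three, Matrix.of_apply, Matrix.cons_val]
    linear_combination (-ω) * ω_pow_three
  rw [h, isUnit_iff_ne_zero]
  exact mul_ne_zero (mul_ne_zero (by norm_num) (ω_isPrimitiveRoot.ne_zero (by norm_num)))
    (sub_ne_zero.2 (ω_isPrimitiveRoot.ne_one (by norm_num)).symm)

theorem J_mul_W : J * W = W * Matrix.diagonal ![1, ω, ω ^ 2] := by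
  have h := ω_pow_three
  ext i j
  fin_cases i <;> fin_cases j <;>
    simp [J, W, Matrix.mul_apply, Fin.sum_univ_three] <;> grind

theorem J_pow_mul_W (n : ℕ) : J ^ n * W = W * Matrix.diagonal (![1, ω, ω ^ 2] ^ n) := by
  induction n with
  | zero => simp
  | succ n ih =>
    rw [pow_succ' J, Matrix.mul_assoc, ih, ← Matrix.mul_assoc, J_mul_W, Matrix.mul_assoc,
      Matrix.diagonal_mul_diagonal', pow_succ' ![1, ω, ω ^ 2]]
    rfl

/-- The powers of `J` are cevian operators. -/
theorem Jz_eq_S (k : ZMod 3) : Jz k = S (ωz (-k)) (ωz k) := by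
  have hd : (![1, ω, ω ^ 2] ^ k.val : Fin 3 → ℂ) = ![1, ωz k, ωz (-k)] := by
    funext i
    fin_cases i
    · simp
    · simp [ωz]
    · simp [ωz_neg, pow_right_comm ω 2]
      rfl
  rw [S, ← hd, ← J_pow_mul_W, Matrix.mul_nonsing_inv_cancel_right _ _ isUnit_det_W, Jz]

theorem smul_S_add_S_add_S (a₀ a₁ a₂ b₀ b₁ b₂ : ℂ) :
    (1 / 3 : ℂ) • (S a₀ b₀ + S a₁ b₁ + S a₂ b₂) =
      S (1 / 3 * (a₀ + a₁ + a₂)) (1 / 3 * (b₀ + b₁ + b₂)) := by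
  have h : Matrix.diagonal ![1, 1 / 3 * (b₀ + b₁ + b₂), 1 / 3 * (a₀ + a₁ + a₂)] =
      (1 / 3 : ℂ) • (Matrix.diagonal ![1, b₀, a₀] + Matrix.diagonal ![1, b₁, a₁] +
        Matrix.diagonal ![1, b₂, a₂]) := by
    ext i j
    fin_cases i <;> fin_cases j <;> norm_num [Matrix.diagonal]
  simp only [S, h, Matrix.mul_add, Matrix.add_mul, Matrix.mul_smul, Matrix.smul_mul, smul_add]

theorem smul_S_add_smul_S (a₀ a₁ b₀ b₁ : ℂ) :
    (1 / 3 : ℂ) • S a₀ b₀ + (2 / 3 : ℂ) • S a₁ b₁ =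
      S (1 / 3 * a₀ + 2 / 3 * a₁) (1 / 3 * b₀ + 2 / 3 * b₁) := by
  have h : Matrix.diagonal ![1, 1 / 3 * b₀ + 2 / 3 * b₁, 1 / 3 * a₀ + 2 / 3 * a₁] =
      (1 / 3 : ℂ) • Matrix.diagonal ![1, b₀, a₀] + (2 / 3 : ℂ) • Matrix.diagonal ![1, b₁, a₁] := by
    ext i j
    fin_cases i <;> fin_cases j <;> norm_num [Matrix.diagonal]
  simp only [S, h, Matrix.mul_add, Matrix.add_mul, Matrix.mul_smul, Matrix.smul_mul]

theorem neg_ωz_div_sub {w y z : ZMod 3} (hyz : y ≠ z) :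
    -ωz w / (ωz z - ωz y) = 1 / 3 * ωz (w + y + z) + 2 / 3 * ωz (w - y) := by
  have hne : ωz z - ωz y ≠ 0 := sub_ne_zero.2 fun h => hyz (ωz_injective h).symm
  have hy := ωz_pow_three y
  have hq : ωz z ^ 2 + ωz z * ωz y + ωz y ^ 2 = 0 := by
    refine (mul_eq_zero.1 ?_).resolve_left hne
    linear_combination ωz_pow_three z - hy
  rw [div_eq_iff hne, sub_eq_add_neg w y]
  simp only [ωz_add, ωz_neg]
  linear_combination (ωz w) * hy - (1 / 3 * ωz w * ωz y) * hq

/-- The eigenvalue of the averaged median operator, for any scalars `u₀, u₁, u₂` that sum to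
zero. -/
theorem average_eigenvalue {w y z : ZMod 3} (hyz : y ≠ z) (η : ℂ) {u₀ u₁ u₂ : ℂ}
    (hu : u₀ + u₁ + u₂ = 0) :
    1 / 3 * ((η * u₀ - ωz w) / (ωz z - ωz y) + (η * u₁ - ωz w) / (ωz z - ωz y) +
      (η * u₂ - ωz w) / (ωz z - ωz y)) = 1 / 3 * ωz (w + y + z) + 2 / 3 * ωz (w - y) := by
  rw [← neg_ωz_div_sub hyz]
  linear_combination (η / 3 / (ωz z - ωz y)) * hu

theorem median_average_over_x (η η' : ℂ) (w y z : ZMod 3) (hyz : y ≠ z) :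
    (1/3 : ℂ) • (M η η' w 0 y z + M η η' w 1 y z + M η η' w 2 y z) =
      (1/3 : ℂ) • Jz (w + y + z) + (2/3 : ℂ) • Jz (w - y) := by
  have hpos : ωz 0 + ωz 1 + ωz 2 = 0 := by
    rw [ωz_zero, ωz_one, ωz_two, one_add_ω_add_sq]
  have hneg : ωz (-0) + ωz (-1) + ωz (-2) = 0 := by
    simp only [ωz_neg, ωz_zero, ωz_one, ωz_two]
    linear_combination one_add_ω_add_sq + ω * ω_pow_three
  simp only [M, Jz_eq_S]
  rw [smul_S_add_S_add_S, smul_S_add_smul_S, average_eigenvalue hyz η' hpos,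
    average_eigenvalue (neg_injective.ne hyz) η hneg]
  congr 4 <;> ring
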